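/- arXiv:2309.10377 — 2 statements merged into one kernel-verified Lean document; each statement's English description precedes it below -/
import Mathlib

section
/- Let D = (V, A) be a directed graph with nonnegative arc costs c, let s, t ∈ V, and let p be a shortest simple s-t-path with ℓ arcs. For any node v ∈ V, let S be a set of simple s-v-paths such that no path in S dominates another path in S with respect to γ_p and no two distinct paths in S have equal γ_p-cost. Then S has cardinality at most ℓ + 1. -/
/-- The arcs of a walk, given as the list of consecutive vertex pairs. -/
def arcsOf {V : Type*} (q : List V) : List (V × V) := q.zip q.tail

/-- `q` is a walk (a finite sequence of consecutive arcs, possibly repeating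
nodes) from `s` to `t` in the digraph on `V` with arc relation `A`. -/
def IsDiWalk {V : Type*} (A : V → V → Prop) (s t : V) (q : List V) : Prop :=
  q ≠ [] ∧ q.head? = some s ∧ q.getLast? = some t ∧ q.Chain' A

/-- `q` is a simple path from `s` to `t`: a walk visiting no node twice. -/
def IsDiPath {V : Type*} (A : V → V → Prop) (s t : V) (q : List V) : Prop :=
  IsDiWalk A s t q ∧ q.Nodup

/-- The cost of a walk: the sum of the costs of its arcs. -/
def pathCost {V : Type*} (c : V → V → NNReal) (q : List V) : NNReal :=
  ((arcsOf q).map fun e => c e.1 e.2).sum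

/-- Second component `γ_{p,2}` of the biobjective cost: the number of arcs of
`q` (with multiplicity along `q`) that are arcs of `p`. -/
def gammaTwo {V : Type*} [DecidableEq V] (p q : List V) : ℕ :=
  ((arcsOf q).filter fun e => decide (e ∈ arcsOf p)).length

/-- `q` dominates `q'` w.r.t. the biobjective cost `γ_p = (pathCost c ·, gammaTwo p ·)`. -/
def DominatesBi {V : Type*} [DecidableEq V] (c : V → V → NNReal) (p q q' : List V) : Prop :=
  pathCost c q ≤ pathCost c q' ∧ gammaTwo p q ≤ gammaTwo p q' ∧
    (pathCost c q < pathCost c q' ∨ gammaTwo p q < gammaTwo p q')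

/-- A simple `s`-`t`-path is efficient w.r.t. `γ_p` if no simple `s`-`t`-path dominates it. -/
def EfficientPath {V : Type*} [DecidableEq V] (A : V → V → Prop) (c : V → V → NNReal)
    (s t : V) (p q : List V) : Prop :=
  IsDiPath A s t q ∧ ∀ r, IsDiPath A s t r → ¬ DominatesBi c p r q

/-- `p` is a shortest simple `s`-`t`-path w.r.t. `c`. -/
def IsShortestPath {V : Type*} (A : V → V → Prop) (c : V → V → NNReal)
    (s t : V) (p : List V) : Prop :=
  IsDiPath A s t p ∧ ∀ r, IsDiPath A s t r → pathCost c p ≤ pathCost c r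

/-- `p₂` is a second shortest simple `s`-`t`-path (w.r.t. the shortest path `p₁`). -/
def IsSecondShortestPath {V : Type*} (A : V → V → Prop) (c : V → V → NNReal)
    (s t : V) (p₁ p₂ : List V) : Prop :=
  IsDiPath A s t p₂ ∧ p₂ ≠ p₁ ∧
    ∀ r, IsDiPath A s t r → r ≠ p₁ → pathCost c p₂ ≤ pathCost c r

/-!
Costs are linearly ordered, so of two paths sharing equally many arcs with `p` the cheaper one
dominates the other. Hence the number of arcs shared with `p` determines a path in `S`, and it lies
in `{0, …, ℓ}` because no path repeats an arc.
-/

theorem injOn_snd_of_isAntichain {α β : Type*} [LinearOrder α] [Preorder β] {T : Set (α × β)}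
    (hT : IsAntichain (· ≤ ·) T) : T.InjOn Prod.snd := by
  intro x hx y hy hxy
  rcases le_total x.1 y.1 with h | h
  · exact hT.eq hx hy ⟨h, hxy.le⟩
  · exact hT.eq' hx hy ⟨h, hxy.ge⟩

theorem encard_le_of_isAntichain_of_snd_le {α : Type*} [LinearOrder α] {T : Set (α × ℕ)} {n : ℕ}
    (hT : IsAntichain (· ≤ ·) T) (hn : ∀ x ∈ T, x.2 ≤ n) : T.encard ≤ n + 1 :=
  calc T.encard ≤ (Set.Iic n).encard :=
        Set.encard_le_encard_of_injOn hn (injOn_snd_of_isAntichain hT)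
    _ = n + 1 := by simp [Set.encard_eq_coe_toFinset_card]

section Arcs

variable {V : Type*}

theorem nodup_arcsOf {q : List V} (hq : q.Nodup) : (arcsOf q).Nodup := by
  have h_targets : (arcsOf q).map Prod.snd = q.tail := List.map_snd_zip (by simp)
  exact .of_map Prod.snd (h_targets ▸ hq.tail)

variable [DecidableEq V]

theorem gammaTwo_le_length_arcsOf (p : List V) {q : List V} (hq : (arcsOf q).Nodup) :
    gammaTwo p q ≤ (arcsOf p).length := by
  have h_subset : (arcsOf q).filter (· ∈ arcsOf p) ⊆ arcsOf p := fun e he => by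
    simpa using (List.mem_filter.mp he).2
  exact ((hq.filter _).subperm h_subset).length_le

/-- The biobjective cost `γ_p` of a walk, valued in the product order, whose strict order is
domination. -/
def biCost (c : V → V → NNReal) (p q : List V) : NNReal × ℕ := (pathCost c q, gammaTwo p q)

theorem dominatesBi_iff_biCost_lt {c : V → V → NNReal} {p q q' : List V} :
    DominatesBi c p q q' ↔ biCost c p q < biCost c p q' := by
  rw [biCost, biCost, Prod.mk_lt_mk, DominatesBi]
  grind

theorem isAntichain_biCost_image {c : V → V → NNReal} {p : List V} {S : Set (List V)}
    (hdom : ∀ q ∈ S, ∀ q' ∈ S, ¬ DominatesBi c p q q') :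
    IsAntichain (· ≤ ·) (biCost c p '' S) := by
  rw [isAntichain_iff_forall_not_lt]
  rintro _ ⟨q, hq, rfl⟩ _ ⟨q', hq', rfl⟩
  exact mt dominatesBi_iff_biCost_lt.mpr (hdom q hq q' hq')

theorem nondominatedSet_card_le_general (c : V → V → NNReal) (p : List V) (S : Set (List V))
    (hS : ∀ q ∈ S, (arcsOf q).Nodup)
    (hdom : ∀ q ∈ S, ∀ q' ∈ S, ¬ DominatesBi c p q q')
    (hinj : S.InjOn (biCost c p)) :
    S.Finite ∧ Nat.card S ≤ (arcsOf p).length + 1 := by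
  have h_shared : ∀ x ∈ biCost c p '' S, x.2 ≤ (arcsOf p).length :=
    Set.forall_mem_image.mpr fun q hq => gammaTwo_le_length_arcsOf p (hS q hq)
  have h_encard : S.encard ≤ ((arcsOf p).length + 1 : ℕ) :=
    hinj.encard_image ▸
      encard_le_of_isAntichain_of_snd_le (isAntichain_biCost_image hdom) h_shared
  exact Set.encard_le_coe_iff_finite_ncard_le.mp h_encard

end Arcs

/-- Let `p` be a shortest simple `s`-`t`-path with `ℓ` arcs. For any node
`v`, a set `S` of simple `s`-`v`-paths that is pairwise non-dominating w.r.t. `γ_p` and has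
pairwise distinct `γ_p`-costs has cardinality at most `ℓ + 1`. -/
theorem nondominatedSet_card_le {V : Type*} [DecidableEq V]
    (A : V → V → Prop) (c : V → V → NNReal) (s t : V) (p : List V) (ℓ : ℕ)
    (hp : IsShortestPath A c s t p) (hℓ : (arcsOf p).length = ℓ)
    (v : V) (S : Set (List V))
    (hS : ∀ q ∈ S, IsDiPath A s v q)
    (hdom : ∀ q ∈ S, ∀ q' ∈ S, ¬ DominatesBi c p q q')
    (hneq : ∀ q ∈ S, ∀ q' ∈ S, q ≠ q' →
      (pathCost c q, gammaTwo p q) ≠ (pathCost c q', gammaTwo p q')) :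
    S.Finite ∧ Nat.card S ≤ ℓ + 1 :=
  hℓ ▸ nondominatedSet_card_le_general c p S (fun q hq => nodup_arcsOf (hS q hq).2) hdom
    fun q hq q' hq' => not_imp_not.mp (hneq q hq q' hq')
end

section
/- Let D = (V, A) be a directed graph with nonnegative arc costs c, let s, t ∈ V, let p₁ be a shortest simple s-t-path, and assume there exist at least two simple s-t-paths. Consider the set Q of simple s-t-paths of the form q = p₁[s..v] ∘ (v,w) ∘ q[w..t], where v is a node of p₁, (v,w) ∈ A is an arc leaving v that is not an arc of p₁, w is not a node of p₁[s..v], and q[w..t] is a shortest w-t-path among simple w-t-paths avoiding all nodes of p₁[s..v]. Then Q is nonempty, the minimum of c over Q equals the cost of a second shortest simple s-t-path, and every path in Q attaining this minimum is a second shortest simple s-t-path. -/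
/-- The set `Q` of candidate second shortest paths: simple `s`-`t`-paths of the form
`p₁[s..v] ∘ (v,w) ∘ q[w..t]` where `v` is a node of `p₁`, `(v,w)` is an arc leaving `v`
that is not an arc of `p₁`, `w` is not a node of the prefix `p₁[s..v]`, and `q[w..t]` is a
shortest `w`-`t`-path among simple `w`-`t`-paths avoiding all nodes of `p₁[s..v]`. -/
def candidateSet {V : Type*} [DecidableEq V] (A : V → V → Prop) (c : V → V → NNReal)
    (t : V) (p₁ : List V) : Set (List V) :=
  { q | ∃ (pre : List V) (v w : V) (suf : List V),
      q = pre ++ w :: suf ∧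
      pre <+: p₁ ∧ pre.getLast? = some v ∧
      A v w ∧ (v, w) ∉ arcsOf p₁ ∧ w ∉ pre ∧
      IsDiPath A w t (w :: suf) ∧
      (∀ x ∈ pre, x ∉ w :: suf) ∧
      (∀ r, IsDiPath A w t r → (∀ x ∈ pre, x ∉ r) →
        pathCost c (w :: suf) ≤ pathCost c r) }

/-!
A simple `s`-`t`-path `r ≠ p₁` cannot be an initial segment of `p₁`, nor conversely, because both
end in `t`. Hence `r` leaves `p₁` for the first time along an arc `(v, w)`, and `(v, w)` is not an
arc of `p₁`, since `p₁` already leaves `v` along another arc. Replacing the part of `r` from `w` on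
by a shortest path avoiding `p₁[s..v]` gives a candidate that costs at most as much as `r`.
Conversely a candidate is a simple `s`-`t`-path containing an arc foreign to `p₁`, so a cheapest
candidate is a cheapest simple `s`-`t`-path other than `p₁`.
-/

theorem exists_eq_append_cons_of_not_prefix {α : Type*} {l₁ l₂ : List α}
    (h₁₂ : ¬ l₁ <+: l₂) (h₂₁ : ¬ l₂ <+: l₁) :
    ∃ l a b m₁ m₂, a ≠ b ∧ l₁ = l ++ a :: m₁ ∧ l₂ = l ++ b :: m₂ := by
  induction l₁ generalizing l₂ with
  | nil => exact absurd List.nil_prefix h₁₂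
  | cons x l₁ ih =>
    cases l₂ with
    | nil => exact absurd List.nil_prefix h₂₁
    | cons y l₂ =>
      by_cases hxy : x = y
      · subst hxy
        rw [List.prefix_cons_inj] at h₁₂ h₂₁
        obtain ⟨l, a, b, m₁, m₂, hab, rfl, rfl⟩ := ih h₁₂ h₂₁
        exact ⟨x :: l, a, b, m₁, m₂, hab, rfl, rfl⟩
      · exact ⟨[], x, y, l₁, l₂, hxy, rfl, rfl⟩

section Arcs

variable {V : Type*}

theorem arcsOf_cons_cons (x y : V) (q : List V) :
    arcsOf (x :: y :: q) = (x, y) :: arcsOf (y :: q) :=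
  rfl

theorem map_fst_arcsOf (q : List V) : (arcsOf q).map Prod.fst = q.dropLast := by
  induction q with
  | nil => rfl
  | cons x q ih =>
    cases q with
    | nil => rfl
    | cons y q => rw [arcsOf_cons_cons, List.map_cons, ih, List.dropLast_cons_cons]

theorem arcsOf_append_cons {pre : List V} {v : V} (hv : pre.getLast? = some v) (w : V)
    (suf : List V) :
    arcsOf (pre ++ w :: suf) = arcsOf pre ++ (v, w) :: arcsOf (w :: suf) := by
  obtain ⟨a, rfl⟩ := List.getLast?_eq_some_iff.1 hv
  clear hv
  induction a with
  | nil => rfl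
  | cons x a ih => cases a <;> simpa [arcsOf_cons_cons] using ih

theorem eq_of_mem_arcsOf_of_nodup {q : List V} (hq : q.Nodup) {v w x : V}
    (hw : (v, w) ∈ arcsOf q) (hx : (v, x) ∈ arcsOf q) : w = x := by
  have hnodup : ((arcsOf q).map Prod.fst).Nodup := by
    rw [map_fst_arcsOf]
    exact hq.sublist (List.dropLast_sublist q)
  exact congrArg Prod.snd (List.inj_on_of_nodup_map hnodup hw hx rfl)

theorem pathCost_append_cons (c : V → V → NNReal) {pre : List V} {v : V}
    (hv : pre.getLast? = some v) (w : V) (suf : List V) :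
    pathCost c (pre ++ w :: suf) = pathCost c pre + (c v w + pathCost c (w :: suf)) := by
  simp [pathCost, arcsOf_append_cons hv]

end Arcs

/-- The simple `w`-`t`-paths that avoid all nodes of `pre`. They are the possible continuations
after `w` of a simple path that starts with `pre` and then moves on to `w`. -/
def avoidingPaths {V : Type*} (A : V → V → Prop) (pre : List V) (w t : V) : Set (List V) :=
  {q | IsDiPath A w t q ∧ pre.Disjoint q}

section SimplePaths

variable {V : Type*} {A : V → V → Prop} {s t v w : V} {p pre r suf : List V}

theorem isDiPath_iff :
    IsDiPath A s t p ↔ p.head? = some s ∧ p.getLast? = some t ∧ p.IsChain A ∧ p.Nodup := by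
  refine ⟨fun ⟨⟨_, hs, ht, hchain⟩, hnodup⟩ => ⟨hs, ht, hchain, hnodup⟩,
    fun ⟨hs, ht, hchain, hnodup⟩ => ⟨⟨?_, hs, ht, hchain⟩, hnodup⟩⟩
  rintro rfl
  cases hs

theorem IsDiPath.head?_eq (hp : IsDiPath A s t p) : p.head? = some s :=
  hp.1.2.1

theorem IsDiPath.getLast?_eq (hp : IsDiPath A s t p) : p.getLast? = some t :=
  hp.1.2.2.1

theorem isDiPath_append_cons_iff (hv : pre.getLast? = some v) :
    IsDiPath A s t (pre ++ w :: suf) ↔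
      IsDiPath A s v pre ∧ A v w ∧ w :: suf ∈ avoidingPaths A pre w t := by
  have hne : pre ≠ [] := by rintro rfl; cases hv
  have hchain : (pre ++ w :: suf).IsChain A ↔
      pre.IsChain A ∧ (w :: suf).IsChain A ∧ A v w := by
    simp [List.isChain_append, hv]
  simp only [isDiPath_iff, avoidingPaths, Set.mem_ofPred_eq, hchain, List.nodup_append',
    List.head?_append_of_ne_nil _ hne, List.getLast?_append_cons, hv, List.head?_cons]
  tauto

theorem IsDiPath.of_prefix (hp : IsDiPath A s t p) (hpre : pre <+: p)
    (hv : pre.getLast? = some v) : IsDiPath A s v pre := by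
  obtain ⟨hs, -, hchain, hnodup⟩ := isDiPath_iff.1 hp
  refine isDiPath_iff.2 ⟨?_, hv, hchain.prefix hpre, hpre.nodup hnodup⟩
  obtain ⟨l, rfl⟩ := hpre
  rwa [List.head?_append_of_ne_nil _ (by rintro rfl; cases hv)] at hs

theorem IsDiPath.eq_of_prefix (hp : IsDiPath A s t p) (hr : IsDiPath A s t r) (h : p <+: r) :
    p = r := by
  obtain ⟨_ | ⟨w, suf⟩, rfl⟩ := h
  · simp
  · obtain ⟨-, -, hsuf, hdisj⟩ := (isDiPath_append_cons_iff hp.getLast?_eq).1 hr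
    exact (hdisj (List.mem_of_getLast? hp.getLast?_eq)
      (List.mem_of_getLast? hsuf.getLast?_eq)).elim

theorem IsDiPath.exists_first_deviation (hp : IsDiPath A s t p) (hr : IsDiPath A s t r)
    (hne : r ≠ p) :
    ∃ pre v w suf, r = pre ++ w :: suf ∧ pre <+: p ∧ pre.getLast? = some v ∧
      (v, w) ∉ arcsOf p := by
  obtain ⟨pre, w, x, suf, l, hwx, rfl, rfl⟩ := exists_eq_append_cons_of_not_prefix
    (fun h => hne (hr.eq_of_prefix hp h)) (fun h => hne (hp.eq_of_prefix hr h).symm)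
  have hpre : pre ≠ [] := by
    rintro rfl
    exact hwx (Option.some.inj (hr.head?_eq.trans hp.head?_eq.symm))
  have hv := List.getLast?_eq_some_getLast hpre
  have hx : (pre.getLast hpre, x) ∈ arcsOf (pre ++ x :: l) := by
    simp [arcsOf_append_cons hv]
  exact ⟨pre, pre.getLast hpre, w, suf, rfl, List.prefix_append _ _, hv,
    fun hw => hwx (eq_of_mem_arcsOf_of_nodup hp.2 hw hx)⟩

theorem finite_setOf_isDiPath [Finite V] (A : V → V → Prop) (s t : V) :
    {q | IsDiPath A s t q}.Finite := by
  have := Fintype.ofFinite V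
  exact (List.finite_length_le V (Fintype.card V)).subset
    fun _ hq => hq.2.length_le_card

theorem exists_shortest_mem_avoidingPaths [Finite V] (c : V → V → NNReal)
    (h : (avoidingPaths A pre w t).Nonempty) :
    ∃ suf, w :: suf ∈ avoidingPaths A pre w t ∧
      ∀ r ∈ avoidingPaths A pre w t, pathCost c (w :: suf) ≤ pathCost c r := by
  obtain ⟨q, hq, hmin⟩ := Set.exists_min_image _ (pathCost c)
    ((finite_setOf_isDiPath A w t).subset fun _ hq => hq.1) h
  obtain ⟨suf, rfl⟩ := List.head?_eq_some_iff.1 hq.1.head?_eq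
  exact ⟨suf, hq, hmin⟩

end SimplePaths

section Candidates

variable {V : Type*} [DecidableEq V] {A : V → V → Prop} {c : V → V → NNReal} {s t : V}
  {p q r : List V}

theorem isDiPath_of_mem_candidateSet (hp : IsDiPath A s t p) (hq : q ∈ candidateSet A c t p) :
    IsDiPath A s t q := by
  obtain ⟨pre, v, w, suf, rfl, hpre, hv, hvw, -, -, hsuf, hdisj, -⟩ := hq
  exact (isDiPath_append_cons_iff hv).2 ⟨hp.of_prefix hpre hv, hvw, hsuf, hdisj⟩

theorem ne_of_mem_candidateSet (hq : q ∈ candidateSet A c t p) : q ≠ p := by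
  obtain ⟨pre, v, w, suf, rfl, -, hv, -, harc, -⟩ := hq
  rintro rfl
  exact harc (by simp [arcsOf_append_cons hv])

theorem exists_mem_candidateSet_pathCost_le [Finite V] (c : V → V → NNReal)
    (hp : IsDiPath A s t p) (hr : IsDiPath A s t r) (hne : r ≠ p) :
    ∃ q ∈ candidateSet A c t p, pathCost c q ≤ pathCost c r := by
  obtain ⟨pre, v, w, m, rfl, hpre, hv, harc⟩ := hp.exists_first_deviation hr hne
  obtain ⟨-, hvw, hm⟩ := (isDiPath_append_cons_iff hv).1 hr
  obtain ⟨suf, ⟨hsuf, hdisj⟩, hmin⟩ := exists_shortest_mem_avoidingPaths c ⟨_, hm⟩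
  have hw : w ∉ pre := fun h => hdisj h List.mem_cons_self
  refine ⟨pre ++ w :: suf, ⟨pre, v, w, suf, rfl, hpre, hv, hvw, harc, hw, hsuf,
    fun _ hx hx' => hdisj hx hx', fun q hq hpreq => hmin q ⟨hq, hpreq⟩⟩, ?_⟩
  calc pathCost c (pre ++ w :: suf)
      = pathCost c pre + (c v w + pathCost c (w :: suf)) := pathCost_append_cons c hv w suf
    _ ≤ pathCost c pre + (c v w + pathCost c (w :: m)) := by gcongr; exact hmin _ hm
    _ = pathCost c (pre ++ w :: m) := (pathCost_append_cons c hv w m).symm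

theorem candidateSet_nonempty [Finite V] (c : V → V → NNReal) (hp : IsDiPath A s t p)
    (htwo : ∃ q₁ q₂, IsDiPath A s t q₁ ∧ IsDiPath A s t q₂ ∧ q₁ ≠ q₂) :
    (candidateSet A c t p).Nonempty := by
  obtain ⟨q₁, q₂, hq₁, hq₂, hne⟩ := htwo
  obtain ⟨r, hr, hrp⟩ : ∃ r, IsDiPath A s t r ∧ r ≠ p := by
    by_cases h : q₁ = p
    · exact ⟨q₂, hq₂, fun h' => hne (h.trans h'.symm)⟩
    · exact ⟨q₁, hq₁, h⟩
  obtain ⟨q, hq, -⟩ := exists_mem_candidateSet_pathCost_le c hp hr hrp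
  exact ⟨q, hq⟩

theorem isSecondShortestPath_of_forall_candidateSet_le [Finite V] (hp : IsDiPath A s t p)
    (hq : q ∈ candidateSet A c t p)
    (hmin : ∀ q' ∈ candidateSet A c t p, pathCost c q ≤ pathCost c q') :
    IsSecondShortestPath A c s t p q := by
  refine ⟨isDiPath_of_mem_candidateSet hp hq, ne_of_mem_candidateSet hq, fun r hr hne => ?_⟩
  obtain ⟨q', hq', hle⟩ := exists_mem_candidateSet_pathCost_le c hp hr hne
  exact (hmin q' hq').trans hle

theorem candidateSet_min_is_secondShortest_general [Finite V] (hp : IsDiPath A s t p)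
    (htwo : ∃ q₁ q₂, IsDiPath A s t q₁ ∧ IsDiPath A s t q₂ ∧ q₁ ≠ q₂) :
    (candidateSet A c t p).Nonempty ∧
    (∃ q ∈ candidateSet A c t p,
      (∀ q' ∈ candidateSet A c t p, pathCost c q ≤ pathCost c q') ∧
      IsSecondShortestPath A c s t p q) ∧
    (∀ q ∈ candidateSet A c t p,
      (∀ q' ∈ candidateSet A c t p, pathCost c q ≤ pathCost c q') →
      IsSecondShortestPath A c s t p q) := by
  have hnonempty := candidateSet_nonempty c hp htwo
  have hfinite : (candidateSet A c t p).Finite :=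
    (finite_setOf_isDiPath A s t).subset fun _ hq => isDiPath_of_mem_candidateSet hp hq
  have hsecond : ∀ q ∈ candidateSet A c t p,
      (∀ q' ∈ candidateSet A c t p, pathCost c q ≤ pathCost c q') →
      IsSecondShortestPath A c s t p q :=
    fun _ hq hmin => isSecondShortestPath_of_forall_candidateSet_le hp hq hmin
  obtain ⟨q, hq, hmin⟩ := Set.exists_min_image _ (pathCost c) hfinite hnonempty
  exact ⟨hnonempty, ⟨q, hq, hmin, hsecond q hq hmin⟩, hsecond⟩

end Candidates

/-- If `p₁` is a shortest simple `s`-`t`-path and at least two simple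
`s`-`t`-paths exist, then the candidate set `Q` is nonempty, the minimum of `c` over `Q`
is attained and equals the cost of a second shortest simple `s`-`t`-path, and every path
in `Q` attaining this minimum is a second shortest simple `s`-`t`-path. -/
theorem candidateSet_min_is_secondShortest {V : Type*} [Fintype V] [DecidableEq V]
    (A : V → V → Prop) (c : V → V → NNReal) (s t : V) (p₁ : List V)
    (hp₁ : IsShortestPath A c s t p₁)
    (htwo : ∃ q₁ q₂ : List V, IsDiPath A s t q₁ ∧ IsDiPath A s t q₂ ∧ q₁ ≠ q₂) :
    (candidateSet A c t p₁).Nonempty ∧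
    (∃ q ∈ candidateSet A c t p₁,
      (∀ q' ∈ candidateSet A c t p₁, pathCost c q ≤ pathCost c q') ∧
      IsSecondShortestPath A c s t p₁ q) ∧
    (∀ q ∈ candidateSet A c t p₁,
      (∀ q' ∈ candidateSet A c t p₁, pathCost c q ≤ pathCost c q') →
      IsSecondShortestPath A c s t p₁ q) :=
  candidateSet_min_is_secondShortest_general hp₁.1 htwo
end
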